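/- Suppose R = X_{i+2} = X_{i+4} = ∅ for some i. If ω(G) ≥ 5, then χ(G) = ω(G). -/

import Mathlib

open SimpleGraph

/-- The claw `K_{1,3}`: vertex 0 adjacent to 1, 2, 3. -/
def claw : SimpleGraph (Fin 4) := SimpleGraph.fromRel (fun a _ => a = 0)

/-- `4K_1`: the edgeless graph on four vertices. -/
def fourK1 : SimpleGraph (Fin 4) := ⊥

/-- `K_5 - e`: the complete graph on five vertices minus the edge {0,1}. -/
def K5e : SimpleGraph (Fin 5) :=
  SimpleGraph.fromRel (fun a b => ¬(a = 0 ∧ b = 1) ∧ ¬(a = 1 ∧ b = 0))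

/-- The 5-wheel: the cycle 0-1-2-3-4-0 together with hub 5 adjacent to all. -/
def wheel5 : SimpleGraph (Fin 6) :=
  SimpleGraph.fromRel (fun a b =>
    (a ≠ 5 ∧ b ≠ 5 ∧ b.val = (a.val + 1) % 5) ∨ a = 5 ∨ b = 5)

/-- The `C_5`-twin: the cycle 0-1-2-3-4-0 together with vertex 5, a true twin
of vertex 0 (adjacent to 0, 1 and 4). -/
def C5twin : SimpleGraph (Fin 6) :=
  SimpleGraph.fromRel (fun a b =>
    (a ≠ 5 ∧ b ≠ 5 ∧ b.val = (a.val + 1) % 5) ∨ (a = 5 ∧ (b = 0 ∨ b = 1 ∨ b = 4)))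

/-- The `P_5`-twin: the path 0-1-2-3-4 together with vertex 5, a true twin of
the middle vertex 2 (adjacent to 1, 2 and 3). -/
def P5twin : SimpleGraph (Fin 6) :=
  SimpleGraph.fromRel (fun a b =>
    (a ≠ 5 ∧ b ≠ 5 ∧ b.val = a.val + 1) ∨ (a = 5 ∧ (b = 1 ∨ b = 2 ∨ b = 3)))

/-- The chordless cycle on seven vertices. -/
def C7 : SimpleGraph (Fin 7) :=
  SimpleGraph.fromRel (fun a b => b.val = (a.val + 1) % 7)

/-- `G` is `H`-free: `G` contains no induced subgraph isomorphic to `H`,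
i.e. there is no graph embedding of `H` into `G`. -/
def Free {V W : Type*} (G : SimpleGraph V) (H : SimpleGraph W) : Prop :=
  IsEmpty (H ↪g G)

/-- `X_i`: vertices outside the five-cycle `v 0, …, v 4` whose neighbours on the
cycle are exactly `v i` and `v (i+1)`. -/
def cycX {V : Type*} (G : SimpleGraph V) (v : ZMod 5 → V) (i : ZMod 5) : Set V :=
  {w | w ∉ Set.range v ∧ ∀ j : ZMod 5, G.Adj w (v j) ↔ (j = i ∨ j = i + 1)}

/-- `Y_i`: vertices outside the five-cycle whose neighbours on the cycle are
exactly `v i, v (i+1), v (i+2), v (i+3)`. -/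
def cycY {V : Type*} (G : SimpleGraph V) (v : ZMod 5 → V) (i : ZMod 5) : Set V :=
  {w | w ∉ Set.range v ∧
    ∀ j : ZMod 5, G.Adj w (v j) ↔ (j = i ∨ j = i + 1 ∨ j = i + 2 ∨ j = i + 3)}

/-- `R`: vertices outside the five-cycle with no neighbour on the cycle. -/
def cycR {V : Type*} (G : SimpleGraph V) (v : ZMod 5 → V) : Set V :=
  {w | w ∉ Set.range v ∧ ∀ j : ZMod 5, ¬ G.Adj w (v j)}


namespace S19

lemma emb {V : Type*} {G : SimpleGraph V} {n : ℕ} {H : SimpleGraph (Fin n)}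
    (hF : _root_.Free G H) (f : Fin n → V)
    (h : ∀ i j, i < j → f i ≠ f j ∧ (G.Adj (f i) (f j) ↔ H.Adj i j)) : False := by
  have hne : ∀ i j, i ≠ j → f i ≠ f j := by
    intro i j hij
    rcases lt_or_gt_of_ne hij with h1 | h1
    · exact (h i j h1).1
    · exact (h j i h1).1.symm
  refine hF.false ⟨⟨f, fun i j hij => by_contra fun hc => hne i j hc hij⟩, ?_⟩
  intro i j
  rcases lt_trichotomy i j with h1 | h1 | h1
  · exact (h i j h1).2
  · subst h1; simp
  · have := (h j i h1).2
    rw [G.adj_comm, H.adj_comm] at this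
    exact this

lemma no_claw {V : Type*} {G : SimpleGraph V} (hF : _root_.Free G claw) (a b c d : V)
    (h1 : G.Adj a b) (h2 : G.Adj a c) (h3 : G.Adj a d)
    (n1 : ¬ G.Adj b c) (n2 : ¬ G.Adj b d) (n3 : ¬ G.Adj c d)
    (e1 : b ≠ c) (e2 : b ≠ d) (e3 : c ≠ d) : False := by
  refine emb hF ![a, b, c, d] ?_
  simp [Fin.forall_fin_succ, claw, h1, h2, h3, n1, n2, n3, e1, e2, e3, h1.ne, h2.ne, h3.ne]

/-- `a`, `b` nonadjacent, `c d e` a triangle complete to both. -/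
lemma no_K5e {V : Type*} {G : SimpleGraph V} (hF : _root_.Free G K5e) (a b c d e : V)
    (hab : a ≠ b) (nab : ¬ G.Adj a b)
    (h1 : G.Adj a c) (h2 : G.Adj a d) (h3 : G.Adj a e)
    (h4 : G.Adj b c) (h5 : G.Adj b d) (h6 : G.Adj b e)
    (h7 : G.Adj c d) (h8 : G.Adj c e) (h9 : G.Adj d e) : False := by
  refine emb hF ![a, b, c, d, e] ?_
  simp [Fin.forall_fin_succ, K5e, *, h1.ne, h2.ne, h3.ne, h4.ne, h5.ne, h6.ne, h7.ne, h8.ne, h9.ne]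

lemma no_P5t {V : Type*} {G : SimpleGraph V} (hF : _root_.Free G P5twin) (a b c d e t : V)
    (h1 : G.Adj a b) (h2 : G.Adj b c) (h3 : G.Adj c d) (h4 : G.Adj d e)
    (h5 : G.Adj b t) (h6 : G.Adj c t) (h7 : G.Adj d t)
    (n1 : ¬ G.Adj a c) (n2 : ¬ G.Adj a d) (n3 : ¬ G.Adj a e) (n4 : ¬ G.Adj a t)
    (n5 : ¬ G.Adj b d) (n6 : ¬ G.Adj b e) (n7 : ¬ G.Adj c e) (n8 : ¬ G.Adj e t) : False := by
  have d1 : a ≠ c := by rintro rfl; exact n2 h3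
  have d2 : a ≠ d := by rintro rfl; exact n3 h4
  have d3 : a ≠ e := by rintro rfl; exact n6 h1.symm
  have d4 : a ≠ t := by rintro rfl; exact n2 h7.symm
  have d5 : b ≠ d := by rintro rfl; exact n6 h4
  have d6 : b ≠ e := by rintro rfl; exact n3 h1
  have d7 : c ≠ e := by rintro rfl; exact n6 h2
  have d8 : e ≠ t := by rintro rfl; exact n6 h5
  refine emb hF ![a, b, c, d, e, t] ?_
  simp [Fin.forall_fin_succ, P5twin, h1, h2, h3, h4, h5, h6, h7, n1, n2, n3, n4, n5, n6, n7, n8,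
    d1, d2, d3, d4, d5, d6, d7, d8, h1.ne, h2.ne, h3.ne, h4.ne, h5.ne, h6.ne, h7.ne]

/-- Induced five-cycle. -/
structure Cyc {V : Type*} (G : SimpleGraph V) (a b c d e : V) : Prop where
  ab : G.Adj a b
  bc : G.Adj b c
  cd : G.Adj c d
  de : G.Adj d e
  ea : G.Adj e a
  ac : ¬ G.Adj a c
  bd : ¬ G.Adj b d
  ce : ¬ G.Adj c e
  da : ¬ G.Adj d a
  eb : ¬ G.Adj e b

/-- Neighbours exactly `a b`. -/
structure PX {V : Type*} (G : SimpleGraph V) (a b c d e w : V) : Prop where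
  a : G.Adj w a
  b : G.Adj w b
  c : ¬ G.Adj w c
  d : ¬ G.Adj w d
  e : ¬ G.Adj w e

/-- Neighbours exactly `a b c d`. -/
structure PY {V : Type*} (G : SimpleGraph V) (a b c d e w : V) : Prop where
  a : G.Adj w a
  b : G.Adj w b
  c : G.Adj w c
  d : G.Adj w d
  e : ¬ G.Adj w e

section
variable {V : Type*} {G : SimpleGraph V} {a b c d e : V}

lemma Cyc.rot (h : Cyc G a b c d e) : Cyc G b c d e a :=
  ⟨h.bc, h.cd, h.de, h.ea, h.ab, h.bd, h.ce, h.da, h.eb, h.ac⟩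

lemma Cyc.refl (h : Cyc G a b c d e) : Cyc G b a e d c :=
  ⟨h.ab.symm, h.ea.symm, h.de.symm, h.cd.symm, h.bc.symm, fun k => h.eb k.symm,
    fun k => h.da k.symm, fun k => h.ce k.symm, fun k => h.bd k.symm, fun k => h.ac k.symm⟩

lemma Cyc.ne_ac (h : Cyc G a b c d e) : a ≠ c := by rintro rfl; exact h.da h.cd.symm

lemma Cyc.ne_ad (h : Cyc G a b c d e) : a ≠ d := by rintro rfl; exact h.ac h.cd.symm

lemma PX.refl {w : V} (h : PX G a b c d e w) : PX G b a e d c w := ⟨h.b, h.a, h.e, h.d, h.c⟩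

lemma PY.refl {w : V} (h : PY G a b c d e w) : PY G d c b a e w := ⟨h.d, h.c, h.b, h.a, h.e⟩

lemma X_clique (hF : _root_.Free G claw) (h : Cyc G a b c d e) {x y : V} (hx : PX G a b c d e x)
    (hy : PX G a b c d e y) (hne : x ≠ y) : G.Adj x y := by
  by_contra hn
  exact no_claw hF a e x y h.ea.symm hx.a.symm hy.a.symm (fun k => hx.e k.symm)
    (fun k => hy.e k.symm) hn (by rintro rfl; exact hx.d h.de.symm)
    (by rintro rfl; exact hy.d h.de.symm) hne

lemma Y_uniq (hF : _root_.Free G claw) (hK : _root_.Free G K5e) (h : Cyc G a b c d e) {x y : V}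
    (hx : PY G a b c d e x) (hy : PY G a b c d e y) : x = y := by
  by_contra hne
  have hxy : G.Adj x y := by
    by_contra hn
    exact no_claw hF a e x y h.ea.symm hx.a.symm hy.a.symm (fun k => hx.e k.symm)
      (fun k => hy.e k.symm) hn (by rintro rfl; exact h.eb hx.b)
      (by rintro rfl; exact h.eb hy.b) hne
  exact no_K5e hK a c x y b h.ne_ac h.ac hx.a.symm hy.a.symm h.ab hx.c.symm hy.c.symm h.bc.symm
    hxy hx.b hy.b

lemma Y_Y1 (hK : _root_.Free G K5e) (h : Cyc G a b c d e) {x y : V}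
    (hx : PY G a b c d e x) (hy : PY G b c d e a y) : ¬ G.Adj x y := fun hxy =>
  no_K5e hK b d x y c h.rot.ne_ac h.bd hx.b.symm hy.a.symm h.bc hx.d.symm hy.c.symm h.cd.symm
    hxy hx.c hy.b

lemma X_Y0 (hF : _root_.Free G claw) (h : Cyc G a b c d e) {x y : V}
    (hx : PX G a b c d e x) (hy : PY G a b c d e y) : G.Adj x y := by
  by_contra hn
  exact no_claw hF a e x y h.ea.symm hx.a.symm hy.a.symm (fun k => hx.e k.symm)
      (fun k => hy.e k.symm) hn (by rintro rfl; exact hx.d h.de.symm)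
      (by rintro rfl; exact h.eb hy.b) (by rintro rfl; exact hx.c hy.c)

lemma X_Y3 (hF : _root_.Free G claw) (h : Cyc G a b c d e) {x y : V}
    (hx : PX G a b c d e x) (hy : PY G d e a b c y) : G.Adj x y :=
  X_Y0 hF h.refl hx.refl hy.refl

lemma X_Y4 (hF : _root_.Free G claw) (h : Cyc G a b c d e) {x y : V}
    (hx : PX G a b c d e x) (hy : PY G e a b c d y) : ¬ G.Adj x y := fun hxy =>
  no_claw hF y e c x hy.a hy.d hxy.symm (fun k => h.ce k.symm) (fun k => hx.e k.symm)
    (fun k => hx.c k.symm) h.rot.rot.ne_ac.symm (by rintro rfl; exact hx.d h.de.symm)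
    (by rintro rfl; exact hx.d h.cd)

lemma X_Y1 (hF : _root_.Free G claw) (h : Cyc G a b c d e) {x y : V}
    (hx : PX G a b c d e x) (hy : PY G b c d e a y) : ¬ G.Adj x y := fun hxy =>
  no_claw hF y e c x hy.d hy.b hxy.symm (fun k => h.ce k.symm) (fun k => hx.e k.symm)
    (fun k => hx.c k.symm) h.rot.rot.ne_ac.symm (by rintro rfl; exact hx.d h.de.symm)
    (by rintro rfl; exact hx.d h.cd)

lemma X_Y2 (hF : _root_.Free G claw) (h : Cyc G a b c d e) {x y : V}
    (hx : PX G a b c d e x) (hy : PY G c d e a b y) : ¬ G.Adj x y := fun hxy =>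
  no_claw hF y e c x hy.c hy.a hxy.symm (fun k => h.ce k.symm) (fun k => hx.e k.symm)
    (fun k => hx.c k.symm) h.rot.rot.ne_ac.symm (by rintro rfl; exact hx.d h.de.symm)
    (by rintro rfl; exact hx.d h.cd)

lemma Y0_Y3 (hF : _root_.Free G claw) (hK : _root_.Free G K5e) (h : Cyc G a b c d e) {x y z : V}
    (hx : PX G a b c d e x) (hy : PY G a b c d e y) (hz : PY G d e a b c z) : G.Adj y z := by
  by_contra hn
  exact no_K5e hK y z x a b (by rintro rfl; exact hy.e hz.b) hn (X_Y0 hF h hx hy).symm hy.a hy.b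
    (X_Y3 hF h hx hz).symm hz.c hz.d hx.a hx.b h.ab

lemma X_X1 (hF : _root_.Free G claw) (hK : _root_.Free G K5e) (h : Cyc G a b c d e) {x y z : V}
    (hx : PX G a b c d e x) (hy : PX G b c d e a y) (hz : PX G b c d e a z)
    (hxy : G.Adj x y) (hxz : G.Adj x z) : y = z := by
  by_contra hne
  exact no_K5e hK x c b y z (by rintro rfl; exact hx.d h.cd) hx.c hx.b hxy hxz h.bc.symm
    hy.b.symm hz.b.symm hy.a.symm hz.a.symm (X_clique hF h.rot hy hz hne)

lemma X_X4 (hF : _root_.Free G claw) (hK : _root_.Free G K5e) (h : Cyc G a b c d e) {x y z : V}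
    (hx : PX G a b c d e x) (hy : PX G e a b c d y) (hz : PX G e a b c d z)
    (hxy : G.Adj x y) (hxz : G.Adj x z) : y = z :=
  X_X1 hF hK h.refl hx.refl hy.refl hz.refl hxy hxz

lemma X_X3 (hF : _root_.Free G claw) (hP : _root_.Free G P5twin) (h : Cyc G a b c d e) {x y z : V}
    (hx : PX G a b c d e x) (hy : PX G d e a b c y) (hz : PX G d e a b c z)
    (hxy : G.Adj x y) (hxz : G.Adj x z) : y = z := by
  by_contra hne
  exact no_P5t hP a x y d c z hx.a.symm hxy hy.a h.cd.symm hxz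
    (X_clique hF h.rot.rot.rot hy hz hne) hz.a.symm (fun k => hy.c k.symm) (fun k => h.da k.symm)
    h.ac (fun k => hz.c k.symm) hx.d hx.c hy.e (fun k => hz.e k.symm)

lemma X_X2 (hF : _root_.Free G claw) (hP : _root_.Free G P5twin) (h : Cyc G a b c d e) {x y z : V}
    (hx : PX G a b c d e x) (hy : PX G c d e a b y) (hz : PX G c d e a b z)
    (hxy : G.Adj x y) (hxz : G.Adj x z) : y = z :=
  X_X3 hF hP h.refl hx.refl hy.refl hz.refl hxy hxz

lemma claw_step (hF : _root_.Free G claw) (h : Cyc G a b c d e) {w : V} (hb : w ≠ b) (he : w ≠ e)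
    (hw : G.Adj w a) : G.Adj w b ∨ G.Adj w e := by
  by_contra hn
  push Not at hn
  exact no_claw hF a b e w h.ab h.ea.symm hw.symm (fun k => h.eb k.symm) (fun k => hn.1 k.symm)
    (fun k => hn.2 k.symm) h.rot.ne_ad hb.symm he.symm

lemma not_three (hF : _root_.Free G C5twin) (h : Cyc G a b c d e) {w : V}
    (h1 : G.Adj w a) (h2 : G.Adj w b) (h3 : ¬ G.Adj w c) (h4 : ¬ G.Adj w d) (h5 : G.Adj w e) :
    False := by
  have hc : w ≠ c := by rintro rfl; exact h.ac h1.symm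
  have hd : w ≠ d := by rintro rfl; exact h.bd h2.symm
  refine emb hF ![a, b, c, d, e, w] ?_
  have := h.ne_ac
  have := h.ne_ad
  have := h.rot.ne_ac
  have := h.rot.ne_ad
  have := h.rot.rot.ne_ac
  have q1 : ¬ G.Adj a d := fun k => h.da k.symm
  have q2 : ¬ G.Adj b e := fun k => h.eb k.symm
  have q3 : ¬ G.Adj c w := fun k => h3 k.symm
  have q4 : ¬ G.Adj d w := fun k => h4 k.symm
  simp [Fin.forall_fin_succ, C5twin, h.ab, h.bc, h.cd, h.de, h.ea.symm, h.ac, h.bd, h.ce,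
    h1.symm, h2.symm, h5.symm, h.ab.ne, h.bc.ne, h.cd.ne,
    h.de.ne, h.ea.ne', h1.ne', h2.ne', h5.ne', hc.symm, hd.symm, *]

lemma not_five (hF : _root_.Free G wheel5) (h : Cyc G a b c d e) {w : V}
    (h1 : G.Adj w a) (h2 : G.Adj w b) (h3 : G.Adj w c) (h4 : G.Adj w d) (h5 : G.Adj w e) :
    False := by
  refine emb hF ![a, b, c, d, e, w] ?_
  have := h.ne_ac
  have := h.ne_ad
  have := h.rot.ne_ac
  have := h.rot.ne_ad
  have := h.rot.rot.ne_ac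
  have q1 : ¬ G.Adj a d := fun k => h.da k.symm
  have q2 : ¬ G.Adj b e := fun k => h.eb k.symm
  simp [Fin.forall_fin_succ, wheel5, h.ab, h.bc, h.cd, h.de, h.ea.symm, h.ac, h.bd, h.ce,
    h1.symm, h2.symm, h3.symm,
    h4.symm, h5.symm, h.ab.ne, h.bc.ne, h.cd.ne,
    h.de.ne, h.ea.ne', h1.ne', h2.ne', h3.ne', h4.ne', h5.ne', *]

end

section
variable {V : Type*}

lemma hall3 (T : Finset V) (L : Finset ℕ) (ok : V → ℕ → Prop)
    (hcard : T.card ≤ L.card)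
    (h1 : ∀ t ∈ T, ∃ c ∈ L, ok t c)
    (h2 : ∀ t ∈ T, ∀ t' ∈ T, t ≠ t' → ∃ c ∈ L, ∃ c' ∈ L, c ≠ c' ∧
      (ok t c ∨ ok t' c) ∧ (ok t c' ∨ ok t' c'))
    (h3 : ∀ t ∈ T, ∀ t' ∈ T, ∀ t'' ∈ T, t ≠ t' → t ≠ t'' → t' ≠ t'' → ∀ c ∈ L,
      ok t c ∨ ok t' c ∨ ok t'' c) :
    ∃ f : V → ℕ, (∀ t ∈ T, f t ∈ L ∧ ok t (f t)) ∧ ∀ t ∈ T, ∀ t' ∈ T, f t = f t' → t = t' := by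
  classical
  have key : ∀ s : Finset T, s.card ≤ (s.biUnion (fun t => L.filter (ok t.1))).card := by
    intro s
    by_cases hs3 : 3 ≤ s.card
    · obtain ⟨x, y, z, hx, hy, hz, hxy, hxz, hyz⟩ := (Finset.two_lt_card_iff).1 hs3
      have hsub : L ⊆ s.biUnion (fun t => L.filter (ok t.1)) := by
        intro c hc
        simp only [Finset.mem_biUnion, Finset.mem_filter]
        rcases h3 x x.2 y y.2 z z.2 (fun h => hxy (Subtype.ext h)) (fun h => hxz (Subtype.ext h))
          (fun h => hyz (Subtype.ext h)) c hc with h | h | h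
        · exact ⟨x, hx, hc, h⟩
        · exact ⟨y, hy, hc, h⟩
        · exact ⟨z, hz, hc, h⟩
      calc s.card ≤ Fintype.card T := Finset.card_le_univ s
        _ = T.card := by simp
        _ ≤ L.card := hcard
        _ ≤ _ := Finset.card_le_card hsub
    · by_cases hs2 : 2 ≤ s.card
      · obtain ⟨x, hx, y, hy, hxy⟩ := Finset.one_lt_card.1 hs2
        obtain ⟨c, hc, c', hc', hcc, ho, ho'⟩ :=
          h2 x x.2 y y.2 (fun h => hxy (Subtype.ext h))
        have : 1 < (s.biUnion (fun t => L.filter (ok t.1))).card := by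
          refine Finset.one_lt_card.2 ⟨c, ?_, c', ?_, hcc⟩
          · simp only [Finset.mem_biUnion, Finset.mem_filter]
            rcases ho with h | h
            · exact ⟨x, hx, hc, h⟩
            · exact ⟨y, hy, hc, h⟩
          · simp only [Finset.mem_biUnion, Finset.mem_filter]
            rcases ho' with h | h
            · exact ⟨x, hx, hc', h⟩
            · exact ⟨y, hy, hc', h⟩
        omega
      · rcases s.eq_empty_or_nonempty with rfl | ⟨x, hx⟩
        · simp
        · obtain ⟨c, hc, ho⟩ := h1 x x.2
          have : 0 < (s.biUnion (fun t => L.filter (ok t.1))).card := by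
            refine Finset.card_pos.2 ⟨c, ?_⟩
            simp only [Finset.mem_biUnion, Finset.mem_filter]
            exact ⟨x, hx, hc, ho⟩
          omega
  obtain ⟨f, hf, hf'⟩ := (Finset.all_card_le_biUnion_card_iff_exists_injective _).1 key
  refine ⟨fun x => if h : x ∈ T then f ⟨x, h⟩ else 0, ?_, ?_⟩
  · intro t ht
    have := hf' ⟨t, ht⟩
    simp only [Finset.mem_filter] at this
    simpa [ht] using this
  · intro t ht t' ht' h
    simp only [ht, ht', dif_pos] at h
    exact congrArg Subtype.val (hf h)

lemma pig {t t' t'' : V} {P1 P2 P3 Q1 Q2 Q3 : Prop} (a1 : ¬ P1 → ¬ P2 → t = t')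
    (a2 : ¬ P1 → ¬ P3 → t = t'') (a3 : ¬ P2 → ¬ P3 → t' = t'') (b1 : ¬ Q1 → ¬ Q2 → t = t')
    (b2 : ¬ Q1 → ¬ Q3 → t = t'') (b3 : ¬ Q2 → ¬ Q3 → t' = t'') (n1 : t ≠ t') (n2 : t ≠ t'')
    (n3 : t' ≠ t'') : (P1 ∧ Q1) ∨ (P2 ∧ Q2) ∨ (P3 ∧ Q3) := by
  have a1' : P1 ∨ P2 := by by_contra k; rw [not_or] at k; exact n1 (a1 k.1 k.2)
  have a2' : P1 ∨ P3 := by by_contra k; rw [not_or] at k; exact n2 (a2 k.1 k.2)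
  have a3' : P2 ∨ P3 := by by_contra k; rw [not_or] at k; exact n3 (a3 k.1 k.2)
  have b1' : Q1 ∨ Q2 := by by_contra k; rw [not_or] at k; exact n1 (b1 k.1 k.2)
  have b2' : Q1 ∨ Q3 := by by_contra k; rw [not_or] at k; exact n2 (b2 k.1 k.2)
  have b3' : Q2 ∨ Q3 := by by_contra k; rw [not_or] at k; exact n3 (b3 k.1 k.2)
  clear a1 a2 a3 b1 b2 b3 n1 n2 n3
  tauto

/-- Edges between `A` and `B` form a matching. -/
def Mat (G : SimpleGraph V) (A B : Finset V) : Prop :=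
  (∀ x ∈ A, ∀ y ∈ B, ∀ z ∈ B, G.Adj x y → G.Adj x z → y = z) ∧
  (∀ x ∈ B, ∀ y ∈ A, ∀ z ∈ A, G.Adj x y → G.Adj x z → y = z)

lemma Mat.symm {G : SimpleGraph V} {A B : Finset V} (h : Mat G A B) : Mat G B A := ⟨h.2, h.1⟩

theorem comb (G : SimpleGraph V) (N : ℕ) (col : V → ℕ) (A B T : Finset V) (LA LB LT : Finset ℕ)
    (dAB : Disjoint A B) (dAT : Disjoint A T) (dBT : Disjoint B T)
    (mAB : Mat G A B) (mAT : Mat G A T) (mBT : Mat G B T)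
    (cA : A.card ≤ LA.card) (cB : B.card ≤ LB.card) (cT : T.card ≤ LT.card)
    (lA : ∀ c ∈ LA, c < N) (lB : ∀ c ∈ LB, c < N) (lT : ∀ c ∈ LT, c < N)
    (hcol : ∀ x, x ∉ A → x ∉ B → x ∉ T → col x < N)
    (hprop : ∀ x, x ∉ A → x ∉ B → x ∉ T → ∀ y, y ∉ A → y ∉ B → y ∉ T → G.Adj x y → col x ≠ col y)
    (hA : ∀ x ∈ A, ∀ y, y ∉ A → y ∉ B → y ∉ T → G.Adj x y → col y ∉ LA)
    (hB : ∀ x ∈ B, ∀ y, y ∉ A → y ∉ B → y ∉ T → G.Adj x y → col y ∉ LB)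
    (hT : ∀ x ∈ T, ∀ y, y ∉ A → y ∉ B → y ∉ T → G.Adj x y → col y ∉ LT)
    (mid : (∃ p ∈ LB, p ∉ LA) ∨ 2 ≤ LB.card)
    (last : (∃ p ∈ LT, ∃ q ∈ LT, p ≠ q ∧ p ∉ LB ∧ q ∉ LB) ∨
      (T.card ≤ 1 ∧ ∃ p ∈ LT, p ∉ LA ∧ p ∉ LB)) : G.Colorable N := by
  classical
  have two : ∀ (S : Finset V) (L : Finset ℕ), S.card ≤ L.card → ∀ t ∈ S, ∀ t' ∈ S, t ≠ t' →
      ∃ c ∈ L, ∃ c' ∈ L, c ≠ c' := by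
    intro S L h t ht t' ht' hne
    have : 1 < S.card := Finset.one_lt_card.2 ⟨t, ht, t', ht', hne⟩
    exact Finset.one_lt_card.1 (this.trans_le h)
  obtain ⟨fA, fA1, fA2⟩ : ∃ f : V → ℕ, (∀ t ∈ A, f t ∈ LA) ∧
      ∀ t ∈ A, ∀ t' ∈ A, f t = f t' → t = t' := by
    obtain ⟨f, h, h'⟩ := hall3 A LA (fun _ _ => True) cA
      (fun t ht => by
        have : 0 < LA.card := (Finset.card_pos.2 ⟨t, ht⟩).trans_le cA
        obtain ⟨c, hc⟩ := Finset.card_pos.1 this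
        exact ⟨c, hc, trivial⟩)
      (fun t ht t' ht' hne => by
        obtain ⟨c, hc, c', hc', hh⟩ := two A LA cA t ht t' ht' hne
        exact ⟨c, hc, c', hc', hh, by simp⟩)
      (by simp)
    exact ⟨f, fun t ht => (h t ht).1, h'⟩
  have row : ∀ (A B : Finset V) (f : V → ℕ), Mat G A B →
      (∀ t ∈ A, ∀ t' ∈ A, f t = f t' → t = t') →
      (∀ t ∈ B, ∀ c c', ¬ (∀ a ∈ A, G.Adj a t → f a ≠ c) → ¬ (∀ a ∈ A, G.Adj a t → f a ≠ c') →
        c = c') ∧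
      (∀ t ∈ B, ∀ t' ∈ B, ∀ c, ¬ (∀ a ∈ A, G.Adj a t → f a ≠ c) →
        ¬ (∀ a ∈ A, G.Adj a t' → f a ≠ c) → t = t') := by
    intro A B f m hf
    constructor
    · intro t ht c c' h h'
      push Not at h h'
      obtain ⟨a, ha, h1, h2⟩ := h
      obtain ⟨a', ha', h1', h2'⟩ := h'
      have := m.2 t ht a ha a' ha' h1.symm h1'.symm
      subst this
      exact h2.symm.trans h2'
    · intro t ht t' ht' c h h'
      push Not at h h'
      obtain ⟨a, ha, h1, h2⟩ := h
      obtain ⟨a', ha', h1', h2'⟩ := h'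
      have := hf a ha a' ha' (h2.trans h2'.symm)
      subst this
      exact m.1 a ha t ht t' ht' h1 h1'
  obtain ⟨fB, fB1, fB2⟩ : ∃ f : V → ℕ,
      (∀ t ∈ B, f t ∈ LB ∧ ∀ a ∈ A, G.Adj a t → fA a ≠ f t) ∧
      ∀ t ∈ B, ∀ t' ∈ B, f t = f t' → t = t' := by
    obtain ⟨r1, r2⟩ := row A B fA mAB fA2
    apply hall3 B LB (fun t c => ∀ a ∈ A, G.Adj a t → fA a ≠ c) cB
    · intro t ht
      rcases mid with ⟨p, hp, hp'⟩ | h2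
      · exact ⟨p, hp, fun a ha _ h => hp' (h ▸ fA1 a ha)⟩
      · obtain ⟨c, hc, c', hc', hne⟩ := Finset.one_lt_card.1 h2
        by_cases h : ∀ a ∈ A, G.Adj a t → fA a ≠ c
        · exact ⟨c, hc, h⟩
        · refine ⟨c', hc', by_contra fun h' => hne (r1 t ht c c' h h')⟩
    · intro t ht t' ht' hne
      obtain ⟨c, hc, c', hc', hh⟩ := two B LB cB t ht t' ht' hne
      refine ⟨c, hc, c', hc', hh, ?_, ?_⟩
      · by_contra h
        rw [not_or] at h
        exact hne (r2 t ht t' ht' c h.1 h.2)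
      · by_contra h
        rw [not_or] at h
        exact hne (r2 t ht t' ht' c' h.1 h.2)
    · intro t ht t' ht' t'' ht'' hne _ _ c hc
      by_contra h
      rw [not_or, not_or] at h
      exact hne (r2 t ht t' ht' c h.1 h.2.1)
  obtain ⟨fT, fT1, fT2⟩ : ∃ f : V → ℕ,
      (∀ t ∈ T, f t ∈ LT ∧ ((∀ a ∈ A, G.Adj a t → fA a ≠ f t) ∧
        (∀ a ∈ B, G.Adj a t → fB a ≠ f t))) ∧
      ∀ t ∈ T, ∀ t' ∈ T, f t = f t' → t = t' := by
    obtain ⟨r1, r2⟩ := row A T fA mAT fA2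
    obtain ⟨s1, s2⟩ := row B T fB mBT fB2
    have pA : ∀ p, p ∉ LA → ∀ t, ∀ a ∈ A, G.Adj a t → fA a ≠ p :=
      fun p hp t a ha _ h => hp (h ▸ fA1 a ha)
    have pB : ∀ p, p ∉ LB → ∀ t, ∀ a ∈ B, G.Adj a t → fB a ≠ p :=
      fun p hp t a ha _ h => hp (h ▸ (fB1 a ha).1)
    apply hall3 T LT (fun t c => (∀ a ∈ A, G.Adj a t → fA a ≠ c) ∧
        (∀ a ∈ B, G.Adj a t → fB a ≠ c)) cT
    · intro t ht
      rcases last with ⟨p, hp, q, hq, hne, hpB, hqB⟩ | ⟨_, p, hp, hpA, hpB⟩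
      · by_cases h : ∀ a ∈ A, G.Adj a t → fA a ≠ p
        · exact ⟨p, hp, h, pB p hpB t⟩
        · exact ⟨q, hq, by_contra fun h' => hne (r1 t ht p q h h'), pB q hqB t⟩
      · exact ⟨p, hp, pA p hpA t, pB p hpB t⟩
    · intro t ht t' ht' htt
      rcases last with ⟨p, hp, q, hq, hne, hpB, hqB⟩ | ⟨hc, _⟩
      · refine ⟨p, hp, q, hq, hne, ?_, ?_⟩
        · by_contra h
          rw [not_or] at h
          exact htt (r2 t ht t' ht' p (fun k => h.1 ⟨k, pB p hpB t⟩) (fun k => h.2 ⟨k, pB p hpB t'⟩))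
        · by_contra h
          rw [not_or] at h
          exact htt (r2 t ht t' ht' q (fun k => h.1 ⟨k, pB q hqB t⟩) (fun k => h.2 ⟨k, pB q hqB t'⟩))
      · exact absurd (Finset.card_le_one.1 hc t ht t' ht') htt
    · intro t ht t' ht' t'' ht'' n1 n2 n3 c hc
      have a1 := r2 t ht t' ht' c
      have a2 := r2 t ht t'' ht'' c
      have a3 := r2 t' ht' t'' ht'' c
      have b1 := s2 t ht t' ht' c
      have b2 := s2 t ht t'' ht'' c
      have b3 := s2 t' ht' t'' ht'' c
      exact pig a1 a2 a3 b1 b2 b3 n1 n2 n3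
  have hAB : ∀ x ∈ A, x ∉ B := fun x h h' => Finset.disjoint_left.1 dAB h h'
  have hAT : ∀ x ∈ A, x ∉ T := fun x h h' => Finset.disjoint_left.1 dAT h h'
  have hBT : ∀ x ∈ B, x ∉ T := fun x h h' => Finset.disjoint_left.1 dBT h h'
  let F : V → ℕ := fun x => if x ∈ A then fA x else if x ∈ B then fB x else if x ∈ T then fT x
    else col x
  have F1 : ∀ x ∈ A, F x = fA x := fun x h => by simp [F, h]
  have F2 : ∀ x ∈ B, F x = fB x := fun x h => by
    have : x ∉ A := fun h' => hAB x h' h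
    simp [F, h, this]
  have F3 : ∀ x ∈ T, F x = fT x := fun x h => by
    have : x ∉ A := fun h' => hAT x h' h
    have : x ∉ B := fun h' => hBT x h' h
    simp [F, *]
  have F4 : ∀ x, x ∉ A → x ∉ B → x ∉ T → F x = col x := fun x h1 h2 h3 => by simp [F, *]
  have cases4 : ∀ x, x ∈ A ∨ x ∈ B ∨ x ∈ T ∨ (x ∉ A ∧ x ∉ B ∧ x ∉ T) := fun x => by tauto
  have Flt : ∀ x, F x < N := by
    intro x
    rcases cases4 x with h | h | h | ⟨h1, h2, h3⟩
    · rw [F1 x h]; exact lA _ (fA1 x h)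
    · rw [F2 x h]; exact lB _ (fB1 x h).1
    · rw [F3 x h]; exact lT _ (fT1 x h).1
    · rw [F4 x h1 h2 h3]; exact hcol x h1 h2 h3
  refine ⟨SimpleGraph.Coloring.mk (fun x => (⟨F x, Flt x⟩ : Fin N)) ?_⟩
  intro x y hxy hFin
  have hF : F x = F y := congrArg Fin.val hFin
  rcases cases4 x with h | h | h | ⟨h1, h2, h3⟩ <;> rcases cases4 y with k | k | k | ⟨k1, k2, k3⟩
  · rw [F1 x h, F1 y k] at hF
    exact hxy.ne (fA2 x h y k hF)
  · rw [F1 x h, F2 y k] at hF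
    exact (fB1 y k).2 x h hxy hF
  · rw [F1 x h, F3 y k] at hF
    exact (fT1 y k).2.1 x h hxy hF
  · rw [F1 x h, F4 y k1 k2 k3] at hF
    exact hA x h y k1 k2 k3 hxy (hF ▸ fA1 x h)
  · rw [F2 x h, F1 y k] at hF
    exact (fB1 x h).2 y k hxy.symm hF.symm
  · rw [F2 x h, F2 y k] at hF
    exact hxy.ne (fB2 x h y k hF)
  · rw [F2 x h, F3 y k] at hF
    exact (fT1 y k).2.2 x h hxy hF
  · rw [F2 x h, F4 y k1 k2 k3] at hF
    exact hB x h y k1 k2 k3 hxy (hF ▸ (fB1 x h).1)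
  · rw [F3 x h, F1 y k] at hF
    exact (fT1 x h).2.1 y k hxy.symm hF.symm
  · rw [F3 x h, F2 y k] at hF
    exact (fT1 x h).2.2 y k hxy.symm hF.symm
  · rw [F3 x h, F3 y k] at hF
    exact hxy.ne (fT2 x h y k hF)
  · rw [F3 x h, F4 y k1 k2 k3] at hF
    exact hT x h y k1 k2 k3 hxy (hF ▸ (fT1 x h).1)
  · rw [F4 x h1 h2 h3, F1 y k] at hF
    exact hA y k x h1 h2 h3 hxy.symm (hF ▸ fA1 y k)
  · rw [F4 x h1 h2 h3, F2 y k] at hF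
    exact hB y k x h1 h2 h3 hxy.symm (hF ▸ (fB1 y k).1)
  · rw [F4 x h1 h2 h3, F3 y k] at hF
    exact hT y k x h1 h2 h3 hxy.symm (hF ▸ (fT1 y k).1)
  · rw [F4 x h1 h2 h3, F4 y k1 k2 k3] at hF
    exact hprop x h1 h2 h3 y k1 k2 k3 hxy hF

end

section
variable {V : Type*} {G : SimpleGraph V} {a b c d e : V}

lemma PX.ne {w : V} (h : Cyc G a b c d e) (hw : PX G a b c d e w) :
    w ≠ a ∧ w ≠ b ∧ w ≠ c ∧ w ≠ d ∧ w ≠ e := by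
  refine ⟨hw.a.ne, hw.b.ne, ?_, ?_, ?_⟩
  · rintro rfl; exact hw.d h.cd
  · rintro rfl; exact hw.c h.cd.symm
  · rintro rfl; exact hw.d h.de.symm

lemma PY.ne {w : V} (h : Cyc G a b c d e) (hw : PY G a b c d e w) :
    w ≠ a ∧ w ≠ b ∧ w ≠ c ∧ w ≠ d ∧ w ≠ e := by
  refine ⟨hw.a.ne, hw.b.ne, hw.c.ne, hw.d.ne, ?_⟩
  rintro rfl; exact h.eb hw.b

/-- Cycle vertices and four-neighbour vertices. -/
def Base (G : SimpleGraph V) (a b c d e y : V) : Prop :=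
  y = a ∨ y = b ∨ y = c ∨ y = d ∨ y = e ∨ PY G a b c d e y ∨ PY G b c d e a y ∨ PY G c d e a b y ∨
    PY G d e a b c y ∨ PY G e a b c d y

/-- Base vertices complete to the first `X` class. -/
def KB (G : SimpleGraph V) (a b c d e y : V) : Prop :=
  y = a ∨ y = b ∨ PY G a b c d e y ∨ PY G d e a b c y

lemma Base.rot {y : V} (h : Base G a b c d e y) : Base G b c d e a y := by
  unfold Base at *; tauto

lemma Base.not_PX {y : V} (h : Cyc G a b c d e) (hb : Base G a b c d e y) :
    ¬ PX G a b c d e y := by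
  intro hx
  obtain ⟨h1, h2, h3, h4, h5⟩ := hx.ne h
  rcases hb with k | k | k | k | k | k | k | k | k | k
  · exact h1 k
  · exact h2 k
  · exact h3 k
  · exact h4 k
  · exact h5 k
  · exact hx.c k.c
  · exact hx.c k.b
  · exact hx.c k.a
  · exact hx.d k.a
  · exact hx.c k.d

lemma KB_of_adj (hF : _root_.Free G claw) (h : Cyc G a b c d e) {x y : V} (hx : PX G a b c d e x)
    (hy : Base G a b c d e y) (hxy : G.Adj x y) : KB G a b c d e y := by
  rcases hy with k | k | k | k | k | k | k | k | k | k
  · exact Or.inl k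
  · exact Or.inr (Or.inl k)
  · subst k; exact absurd hxy hx.c
  · subst k; exact absurd hxy hx.d
  · subst k; exact absurd hxy hx.e
  · exact Or.inr (Or.inr (Or.inl k))
  · exact absurd hxy (X_Y1 hF h hx k)
  · exact absurd hxy (X_Y2 hF h hx k)
  · exact Or.inr (Or.inr (Or.inr k))
  · exact absurd hxy (X_Y4 hF h hx k)

lemma KB_adj (hF : _root_.Free G claw) (h : Cyc G a b c d e) {x y : V} (hx : PX G a b c d e x)
    (hy : KB G a b c d e y) : G.Adj x y := by
  rcases hy with rfl | rfl | k | k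
  · exact hx.a
  · exact hx.b
  · exact X_Y0 hF h hx k
  · exact X_Y3 hF h hx k

lemma KB_clique (hF : _root_.Free G claw) (hK : _root_.Free G K5e) (h : Cyc G a b c d e)
    {x y z : V} (hx : PX G a b c d e x)
    (hy : KB G a b c d e y) (hz : KB G a b c d e z) (hne : y ≠ z) : G.Adj y z := by
  rcases hy with rfl | rfl | k | k <;> rcases hz with rfl | rfl | m | m
  · exact absurd rfl hne
  · exact h.ab
  · exact m.a.symm
  · exact m.c.symm
  · exact h.ab.symm
  · exact absurd rfl hne
  · exact m.b.symm
  · exact m.d.symm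
  · exact k.a
  · exact k.b
  · exact absurd (Y_uniq hF hK h k m) hne
  · exact Y0_Y3 hF hK h hx k m
  · exact k.c
  · exact k.d
  · exact (Y0_Y3 hF hK h hx m k).symm
  · exact absurd (Y_uniq hF hK h.rot.rot.rot k m) hne

lemma classify (hF : _root_.Free G claw) (hT : _root_.Free G C5twin) (hW : _root_.Free G wheel5)
    (h : Cyc G a b c d e) (w : V) (h1 : w ≠ a) (h2 : w ≠ b) (h3 : w ≠ c) (h4 : w ≠ d) (h5 : w ≠ e)
    (hR : ¬ (¬ G.Adj w a ∧ ¬ G.Adj w b ∧ ¬ G.Adj w c ∧ ¬ G.Adj w d ∧ ¬ G.Adj w e)) :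
    Base G a b c d e w ∨ PX G a b c d e w ∨ PX G b c d e a w ∨ PX G c d e a b w ∨
      PX G d e a b c w ∨ PX G e a b c d w := by
  have s1 := claw_step hF h h2 h5
  have s2 := claw_step hF h.rot h3 h1
  have s3 := claw_step hF h.rot.rot h4 h2
  have s4 := claw_step hF h.rot.rot.rot h5 h3
  have s5 := claw_step hF h.rot.rot.rot.rot h1 h4
  have t1 := not_three hT h (w := w)
  have t2 := not_three hT h.rot (w := w)
  have t3 := not_three hT h.rot.rot (w := w)
  have t4 := not_three hT h.rot.rot.rot (w := w)
  have t5 := not_three hT h.rot.rot.rot.rot (w := w)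
  have f := not_five hW h (w := w)
  have ePX : ∀ a b c d e : V, PX G a b c d e w ↔ (G.Adj w a ∧ G.Adj w b ∧ ¬ G.Adj w c ∧
      ¬ G.Adj w d ∧ ¬ G.Adj w e) := fun a b c d e =>
    ⟨fun k => ⟨k.a, k.b, k.c, k.d, k.e⟩, fun ⟨k1, k2, k3, k4, k5⟩ => ⟨k1, k2, k3, k4, k5⟩⟩
  have ePY : ∀ a b c d e : V, PY G a b c d e w ↔ (G.Adj w a ∧ G.Adj w b ∧ G.Adj w c ∧
      G.Adj w d ∧ ¬ G.Adj w e) := fun a b c d e =>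
    ⟨fun k => ⟨k.a, k.b, k.c, k.d, k.e⟩, fun ⟨k1, k2, k3, k4, k5⟩ => ⟨k1, k2, k3, k4, k5⟩⟩
  simp only [Base, ePX, ePY, h1, h2, h3, h4, h5, false_or]
  clear ePX ePY
  by_cases a1 : G.Adj w a <;> by_cases a2 : G.Adj w b <;> by_cases a3 : G.Adj w c <;>
    by_cases a4 : G.Adj w d <;> by_cases a5 : G.Adj w e <;> simp_all

lemma exists_col (h : Cyc G a b c d e) (k0 k1 k2 k3 k4 l0 l1 l2 l3 l4 : ℕ) :
    ∃ col : V → ℕ, col a = k0 ∧ col b = k1 ∧ col c = k2 ∧ col d = k3 ∧ col e = k4 ∧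
      (∀ w, PY G a b c d e w → col w = l0) ∧ (∀ w, PY G b c d e a w → col w = l1) ∧
      (∀ w, PY G c d e a b w → col w = l2) ∧ (∀ w, PY G d e a b c w → col w = l3) ∧
      (∀ w, PY G e a b c d w → col w = l4) := by
  classical
  have n1 := h.ne_ac
  have n2 := h.ne_ad
  have n3 := h.rot.ne_ac
  have n4 := h.rot.ne_ad
  have n5 := h.rot.rot.ne_ac
  have m1 := h.ab.ne
  have m2 := h.bc.ne
  have m3 := h.cd.ne
  have m4 := h.de.ne
  have m5 := h.ea.ne'
  refine ⟨fun w => if w = a then k0 else if w = b then k1 else if w = c then k2 else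
    if w = d then k3 else if w = e then k4 else if ¬ G.Adj w e then l0 else
    if ¬ G.Adj w a then l1 else if ¬ G.Adj w b then l2 else if ¬ G.Adj w c then l3 else l4,
    ?_, ?_, ?_, ?_, ?_, ?_, ?_, ?_, ?_, ?_⟩
  · simp
  · simp [m1.symm]
  · simp [n1.symm, m2.symm]
  · simp [n2.symm, n3.symm, m3.symm]
  · simp [m5.symm, n4.symm, n5.symm, m4.symm]
  · intro w hw
    obtain ⟨q1, q2, q3, q4, q5⟩ := hw.ne h
    simp [*, hw.a, hw.b, hw.c, hw.d, hw.e]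
  · intro w hw
    obtain ⟨q1, q2, q3, q4, q5⟩ := hw.ne h.rot
    simp [*, hw.a, hw.b, hw.c, hw.d, hw.e]
  · intro w hw
    obtain ⟨q1, q2, q3, q4, q5⟩ := hw.ne h.rot.rot
    simp [*, hw.a, hw.b, hw.c, hw.d, hw.e]
  · intro w hw
    obtain ⟨q1, q2, q3, q4, q5⟩ := hw.ne h.rot.rot.rot
    simp [*, hw.a, hw.b, hw.c, hw.d, hw.e]
  · intro w hw
    obtain ⟨q1, q2, q3, q4, q5⟩ := hw.ne h.rot.rot.rot.rot
    simp [*, hw.a, hw.b, hw.c, hw.d, hw.e]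

/-- Everything needed by `comb` except for the order conditions. -/
structure Data (G : SimpleGraph V) (N : ℕ) (col : V → ℕ) (A B T : Finset V)
    (LA LB LT : Finset ℕ) : Prop where
  dAB : Disjoint A B
  dAT : Disjoint A T
  dBT : Disjoint B T
  mAB : Mat G A B
  mAT : Mat G A T
  mBT : Mat G B T
  cA : A.card ≤ LA.card
  cB : B.card ≤ LB.card
  cT : T.card ≤ LT.card
  lA : ∀ c ∈ LA, c < N
  lB : ∀ c ∈ LB, c < N
  lT : ∀ c ∈ LT, c < N
  hcol : ∀ x, x ∉ A → x ∉ B → x ∉ T → col x < N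
  hprop : ∀ x, x ∉ A → x ∉ B → x ∉ T → ∀ y, y ∉ A → y ∉ B → y ∉ T → G.Adj x y → col x ≠ col y
  hA : ∀ x ∈ A, ∀ y, y ∉ A → y ∉ B → y ∉ T → G.Adj x y → col y ∉ LA
  hB : ∀ x ∈ B, ∀ y, y ∉ A → y ∉ B → y ∉ T → G.Adj x y → col y ∉ LB
  hT : ∀ x ∈ T, ∀ y, y ∉ A → y ∉ B → y ∉ T → G.Adj x y → col y ∉ LT

section
variable {N : ℕ} {col : V → ℕ} {A B T : Finset V} {LA LB LT : Finset ℕ}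

lemma Data.swap12 (D : Data G N col A B T LA LB LT) : Data G N col B A T LB LA LT where
  dAB := D.dAB.symm
  dAT := D.dBT
  dBT := D.dAT
  mAB := D.mAB.symm
  mAT := D.mBT
  mBT := D.mAT
  cA := D.cB
  cB := D.cA
  cT := D.cT
  lA := D.lB
  lB := D.lA
  lT := D.lT
  hcol := fun x h1 h2 h3 => D.hcol x h2 h1 h3
  hprop := fun x h1 h2 h3 y k1 k2 k3 => D.hprop x h2 h1 h3 y k2 k1 k3
  hA := fun x hx y k1 k2 k3 => D.hB x hx y k2 k1 k3
  hB := fun x hx y k1 k2 k3 => D.hA x hx y k2 k1 k3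
  hT := fun x hx y k1 k2 k3 => D.hT x hx y k2 k1 k3

lemma Data.swap23 (D : Data G N col A B T LA LB LT) : Data G N col A T B LA LT LB where
  dAB := D.dAT
  dAT := D.dAB
  dBT := D.dBT.symm
  mAB := D.mAT
  mAT := D.mAB
  mBT := D.mBT.symm
  cA := D.cA
  cB := D.cT
  cT := D.cB
  lA := D.lA
  lB := D.lT
  lT := D.lB
  hcol := fun x h1 h2 h3 => D.hcol x h1 h3 h2
  hprop := fun x h1 h2 h3 y k1 k2 k3 => D.hprop x h1 h3 h2 y k1 k3 k2
  hA := fun x hx y k1 k2 k3 => D.hA x hx y k1 k3 k2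
  hB := fun x hx y k1 k2 k3 => D.hT x hx y k1 k3 k2
  hT := fun x hx y k1 k2 k3 => D.hB x hx y k1 k3 k2

lemma Data.color (D : Data G N col A B T LA LB LT)
    (mid : (∃ p ∈ LB, p ∉ LA) ∨ 2 ≤ LB.card)
    (last : (∃ p ∈ LT, ∃ q ∈ LT, p ≠ q ∧ p ∉ LB ∧ q ∉ LB) ∨
      (T.card ≤ 1 ∧ ∃ p ∈ LT, p ∉ LA ∧ p ∉ LB)) : G.Colorable N :=
  comb G N col A B T LA LB LT D.dAB D.dAT D.dBT D.mAB D.mAT D.mBT D.cA D.cB D.cT D.lA D.lB D.lT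
    D.hcol D.hprop D.hA D.hB D.hT mid last

end

section
variable [Fintype V]

open Classical in
/-- The `X` class as a finset. -/
noncomputable def XS (G : SimpleGraph V) (a b c d e : V) : Finset V :=
  Finset.univ.filter (PX G a b c d e)

open Classical in
/-- Base vertices of the clique through the `X` class. -/
noncomputable def KS (G : SimpleGraph V) (a b c d e : V) : Finset V :=
  Finset.univ.filter (KB G a b c d e)

open Classical in
/-- Colours left for the `X` class. -/
noncomputable def LL (G : SimpleGraph V) (N : ℕ) (col : V → ℕ) (a b c d e : V) : Finset ℕ :=
  Finset.range N \ (KS G a b c d e).image col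

lemma mem_XS {w : V} : w ∈ XS G a b c d e ↔ PX G a b c d e w := by simp [XS]

lemma mem_LL {N : ℕ} {col : V → ℕ} {p : ℕ} : p ∈ LL G N col a b c d e ↔
    p < N ∧ col a ≠ p ∧ col b ≠ p ∧ (∀ w, PY G a b c d e w → col w ≠ p) ∧
      (∀ w, PY G d e a b c w → col w ≠ p) := by
  simp only [LL, KS, KB, Finset.mem_sdiff, Finset.mem_range, Finset.mem_image, Finset.mem_filter,
    Finset.mem_univ, true_and, not_exists, not_and]
  constructor
  · rintro ⟨h1, h2⟩
    exact ⟨h1, h2 a (by tauto), h2 b (by tauto), fun w hw => h2 w (by tauto),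
      fun w hw => h2 w (by tauto)⟩
  · rintro ⟨h1, h2, h3, h4, h5⟩
    refine ⟨h1, ?_⟩
    rintro w (rfl | rfl | k | k)
    · exact h2
    · exact h3
    · exact h4 w k
    · exact h5 w k

lemma clique_card (hF : _root_.Free G claw) (hK : _root_.Free G K5e) (h : Cyc G a b c d e)
    (hne : (XS G a b c d e).Nonempty) :
    (XS G a b c d e).card + (KS G a b c d e).card ≤ G.cliqueNum := by
  classical
  obtain ⟨x0, hx0⟩ := hne
  rw [mem_XS] at hx0
  have hd : Disjoint (XS G a b c d e) (KS G a b c d e) := by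
    rw [Finset.disjoint_left]
    intro x hx hk
    rw [mem_XS] at hx
    simp only [KS, Finset.mem_filter, Finset.mem_univ, true_and] at hk
    exact G.loopless.irrefl x (KB_adj hF h hx hk)
  rw [← Finset.card_union_of_disjoint hd]
  apply SimpleGraph.IsClique.card_le_cliqueNum
  intro x hx y hy hxy
  simp only [Finset.coe_union, Set.mem_union, Finset.mem_coe, mem_XS, KS, Finset.mem_filter,
    Finset.mem_univ, true_and] at hx hy
  rcases hx with hx | hx <;> rcases hy with hy | hy
  · exact X_clique hF h hx hy hxy
  · exact KB_adj hF h hx hy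
  · exact (KB_adj hF h hy hx).symm
  · exact KB_clique hF hK h hx0 hx hy hxy

lemma row_card (hF : _root_.Free G claw) (hK : _root_.Free G K5e) (h : Cyc G a b c d e)
    (col : V → ℕ) : (XS G a b c d e).card ≤ (LL G G.cliqueNum col a b c d e).card := by
  classical
  rcases (XS G a b c d e).eq_empty_or_nonempty with h0 | hne
  · simp [h0]
  · have h1 := clique_card hF hK h hne
    have h2 : (Finset.range G.cliqueNum).card - ((KS G a b c d e).image col).card ≤
      (LL G G.cliqueNum col a b c d e).card := Finset.le_card_sdiff _ _
    have h3 : ((KS G a b c d e).image col).card ≤ (KS G a b c d e).card := Finset.card_image_le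
    rw [Finset.card_range] at h2
    omega

lemma row_adj (hF : _root_.Free G claw) (h : Cyc G a b c d e) {N : ℕ} (col : V → ℕ) {x y : V}
    (hx : PX G a b c d e x) (hy : Base G a b c d e y) (hxy : G.Adj x y) :
    col y ∉ LL G N col a b c d e := by
  classical
  intro hm
  have := KB_of_adj hF h hx hy hxy
  simp only [LL, Finset.mem_sdiff, Finset.mem_image, not_exists, not_and] at hm
  exact hm.2 y (by simp [KS, this]) rfl

lemma mkData (hF : _root_.Free G claw) (hK : _root_.Free G K5e) (hP : _root_.Free G P5twin)
    (h : Cyc G a b c d e)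
    (hall : ∀ w, Base G a b c d e w ∨ PX G a b c d e w ∨ PX G b c d e a w ∨ PX G d e a b c w)
    (col : V → ℕ) (hcol : ∀ x, Base G a b c d e x → col x < G.cliqueNum)
    (hprop : ∀ x, Base G a b c d e x → ∀ y, Base G a b c d e y → G.Adj x y → col x ≠ col y) :
    Data G G.cliqueNum col (XS G a b c d e) (XS G b c d e a) (XS G d e a b c)
      (LL G G.cliqueNum col a b c d e) (LL G G.cliqueNum col b c d e a)
      (LL G G.cliqueNum col d e a b c) := by
  have hb : ∀ w, w ∉ XS G a b c d e → w ∉ XS G b c d e a → w ∉ XS G d e a b c →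
      Base G a b c d e w := by
    intro w h1 h2 h3
    rw [mem_XS] at h1 h2 h3
    rcases hall w with k | k | k | k
    · exact k
    · exact absurd k h1
    · exact absurd k h2
    · exact absurd k h3
  have h1 := h.rot
  have h3 := h.rot.rot.rot
  refine ⟨?_, ?_, ?_, ⟨?_, ?_⟩, ⟨?_, ?_⟩, ⟨?_, ?_⟩, row_card hF hK h col, row_card hF hK h1 col,
    row_card hF hK h3 col, fun p hp => (mem_LL.1 hp).1, fun p hp => (mem_LL.1 hp).1,
    fun p hp => (mem_LL.1 hp).1, fun x k1 k2 k3 => hcol x (hb x k1 k2 k3),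
    fun x k1 k2 k3 y m1 m2 m3 => hprop x (hb x k1 k2 k3) y (hb y m1 m2 m3), ?_, ?_, ?_⟩
  · rw [Finset.disjoint_left]
    intro x hx hy
    rw [mem_XS] at hx hy
    exact hx.c hy.b
  · rw [Finset.disjoint_left]
    intro x hx hy
    rw [mem_XS] at hx hy
    exact hx.d hy.a
  · rw [Finset.disjoint_left]
    intro x hx hy
    rw [mem_XS] at hx hy
    exact hx.c hy.a
  · intro x hx y hy z hz
    rw [mem_XS] at hx hy hz
    exact X_X1 hF hK h hx hy hz
  · intro x hx y hy z hz
    rw [mem_XS] at hx hy hz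
    exact X_X4 hF hK h1 hx hy hz
  · intro x hx y hy z hz
    rw [mem_XS] at hx hy hz
    exact X_X3 hF hP h hx hy hz
  · intro x hx y hy z hz
    rw [mem_XS] at hx hy hz
    exact X_X2 hF hP h3 hx hy hz
  · intro x hx y hy z hz
    rw [mem_XS] at hx hy hz
    exact X_X2 hF hP h1 hx hy hz
  · intro x hx y hy z hz
    rw [mem_XS] at hx hy hz
    exact X_X3 hF hP h3 hx hy hz
  · intro x hx y k1 k2 k3
    exact row_adj hF h col (mem_XS.1 hx) (hb y k1 k2 k3)
  · intro x hx y k1 k2 k3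
    exact row_adj hF h1 col (mem_XS.1 hx) (hb y k1 k2 k3).rot
  · intro x hx y k1 k2 k3
    exact row_adj hF h3 col (mem_XS.1 hx) (hb y k1 k2 k3).rot.rot.rot

theorem main (hF : _root_.Free G claw) (hK : _root_.Free G K5e) (hP : _root_.Free G P5twin)
    (h : Cyc G a b c d e)
    (hall : ∀ w, Base G a b c d e w ∨ PX G a b c d e w ∨ PX G b c d e a w ∨ PX G d e a b c w)
    (hN : 5 ≤ G.cliqueNum) : G.Colorable G.cliqueNum := by
  have u0 : ∀ x y, PY G a b c d e x → PY G a b c d e y → ¬ G.Adj x y :=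
    fun x y hx hy k => k.ne (Y_uniq hF hK h hx hy)
  have u1 : ∀ x y, PY G b c d e a x → PY G b c d e a y → ¬ G.Adj x y :=
    fun x y hx hy k => k.ne (Y_uniq hF hK h.rot hx hy)
  have u2 : ∀ x y, PY G c d e a b x → PY G c d e a b y → ¬ G.Adj x y :=
    fun x y hx hy k => k.ne (Y_uniq hF hK h.rot.rot hx hy)
  have u3 : ∀ x y, PY G d e a b c x → PY G d e a b c y → ¬ G.Adj x y :=
    fun x y hx hy k => k.ne (Y_uniq hF hK h.rot.rot.rot hx hy)
  have u4 : ∀ x y, PY G e a b c d x → PY G e a b c d y → ¬ G.Adj x y :=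
    fun x y hx hy k => k.ne (Y_uniq hF hK h.rot.rot.rot.rot hx hy)
  have u01 : ∀ x y, PY G a b c d e x → PY G b c d e a y → ¬ G.Adj x y :=
    fun x y hx hy => Y_Y1 hK h hx hy
  have u34 : ∀ x y, PY G d e a b c x → PY G e a b c d y → ¬ G.Adj x y :=
    fun x y hx hy => Y_Y1 hK h.rot.rot.rot hx hy
  by_cases hB : (∃ w, PY G a b c d e w) ∧ (∃ w, PY G b c d e a w) ∧ (∃ w, PY G d e a b c w) ∧
      (∃ w, PY G e a b c d w) ∧ 6 ≤ G.cliqueNum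
  · obtain ⟨⟨y0, hy0⟩, ⟨y1, hy1⟩, ⟨y3, hy3⟩, ⟨y4, hy4⟩, h6⟩ := hB
    obtain ⟨col, ca, cb, cc, cd, ce, c0, c1, c2, c3, c4⟩ := exists_col h 3 1 3 4 5 0 0 1 2 2
    have D := mkData hF hK hP h hall col
      (by
        rintro x (rfl | rfl | rfl | rfl | rfl | k | k | k | k | k)
        · omega
        · omega
        · omega
        · omega
        · omega
        · rw [c0 x k]; omega
        · rw [c1 x k]; omega
        · rw [c2 x k]; omega
        · rw [c3 x k]; omega
        · rw [c4 x k]; omega)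
      (by
        have hac := h.ac
        intro x hx y hy hxy hc
        rcases hx with hx | hx | hx | hx | hx | hx | hx | hx | hx | hx <;>
          rcases hy with hy | hy | hy | hy | hy | hy | hy | hy | hy | hy <;>
          first
          | (have q1 := c0 x hx) | (have q1 := c1 x hx) | (have q1 := c2 x hx)
          | (have q1 := c3 x hx) | (have q1 := c4 x hx) | (have q1 := congrArg col hx)
        all_goals
          first
          | (have q2 := c0 y hy) | (have q2 := c1 y hy) | (have q2 := c2 y hy)
          | (have q2 := c3 y hy) | (have q2 := c4 y hy) | (have q2 := congrArg col hy)
        all_goals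
          first
          | omega
          | exact u0 x y hx hy hxy
          | exact u1 x y hx hy hxy
          | exact u2 x y hx hy hxy
          | exact u3 x y hx hy hxy
          | exact u4 x y hx hy hxy
          | exact u01 x y hx hy hxy
          | exact u34 x y hx hy hxy
          | exact u01 y x hy hx hxy.symm
          | exact u34 y x hy hx hxy.symm
          | exact hxy.ne (hx.trans hy.symm)
          | (rw [hx] at hxy; exact hy.e hxy.symm)
          | (rw [hy] at hxy; exact hx.e hxy)
          | (rw [hx, hy] at hxy; exact hac hxy)
          | (rw [hx, hy] at hxy; exact hac hxy.symm))
    refine D.color (Or.inr ?_) (Or.inl ⟨1, ?_, 3, ?_, by norm_num, ?_, ?_⟩)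
    · refine Finset.one_lt_card.2 ⟨4, ?_, 5, ?_, by norm_num⟩ <;>
      · rw [mem_LL, cb, cc]
        refine ⟨by omega, by norm_num, by norm_num, fun w hw => ?_, fun w hw => ?_⟩
        · rw [c1 w hw]; norm_num
        · rw [c4 w hw]; norm_num
    · rw [mem_LL, cd, ce]
      refine ⟨by omega, by norm_num, by norm_num, fun w hw => ?_, fun w hw => ?_⟩
      · rw [c3 w hw]; norm_num
      · rw [c1 w hw]; norm_num
    · rw [mem_LL, cd, ce]
      refine ⟨by omega, by norm_num, by norm_num, fun w hw => ?_, fun w hw => ?_⟩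
      · rw [c3 w hw]; norm_num
      · rw [c1 w hw]; norm_num
    · rw [mem_LL]
      exact fun k => k.2.1 cb
    · rw [mem_LL]
      exact fun k => k.2.2.1 cc
  · obtain ⟨col, ca, cb, cc, cd, ce, c0, c1, c2, c3, c4⟩ := exists_col h 0 1 2 3 4 4 0 1 2 3
    have D := mkData hF hK hP h hall col
      (by
        rintro x (rfl | rfl | rfl | rfl | rfl | k | k | k | k | k)
        · omega
        · omega
        · omega
        · omega
        · omega
        · rw [c0 x k]; omega
        · rw [c1 x k]; omega
        · rw [c2 x k]; omega
        · rw [c3 x k]; omega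
        · rw [c4 x k]; omega)
      (by
        intro x hx y hy hxy hc
        rcases hx with hx | hx | hx | hx | hx | hx | hx | hx | hx | hx <;>
          rcases hy with hy | hy | hy | hy | hy | hy | hy | hy | hy | hy <;>
          first
          | (have q1 := c0 x hx) | (have q1 := c1 x hx) | (have q1 := c2 x hx)
          | (have q1 := c3 x hx) | (have q1 := c4 x hx) | (have q1 := congrArg col hx)
        all_goals
          first
          | (have q2 := c0 y hy) | (have q2 := c1 y hy) | (have q2 := c2 y hy)
          | (have q2 := c3 y hy) | (have q2 := c4 y hy) | (have q2 := congrArg col hy)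
        all_goals
          first
          | omega
          | exact u0 x y hx hy hxy
          | exact u1 x y hx hy hxy
          | exact u2 x y hx hy hxy
          | exact u3 x y hx hy hxy
          | exact u4 x y hx hy hxy
          | exact hxy.ne (hx.trans hy.symm)
          | (rw [hx] at hxy; exact hy.e hxy.symm)
          | (rw [hy] at hxy; exact hx.e hxy))
    have l0 : ∀ p, p ∈ LL G G.cliqueNum col a b c d e ↔ p < G.cliqueNum ∧ p ≠ 0 ∧ p ≠ 1 ∧
        ((∃ w, PY G a b c d e w) → p ≠ 4) ∧ ((∃ w, PY G d e a b c w) → p ≠ 2) := by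
      intro p
      rw [mem_LL, ca, cb]
      refine and_congr_right fun _ => and_congr ne_comm (and_congr ne_comm (and_congr ?_ ?_))
      · exact ⟨fun k ⟨w, hw⟩ => c0 w hw ▸ (k w hw).symm, fun k w hw => c0 w hw ▸ (k ⟨w, hw⟩).symm⟩
      · exact ⟨fun k ⟨w, hw⟩ => c3 w hw ▸ (k w hw).symm, fun k w hw => c3 w hw ▸ (k ⟨w, hw⟩).symm⟩
    have l1 : ∀ p, p ∈ LL G G.cliqueNum col b c d e a ↔ p < G.cliqueNum ∧ p ≠ 1 ∧ p ≠ 2 ∧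
        ((∃ w, PY G b c d e a w) → p ≠ 0) ∧ ((∃ w, PY G e a b c d w) → p ≠ 3) := by
      intro p
      rw [mem_LL, cb, cc]
      refine and_congr_right fun _ => and_congr ne_comm (and_congr ne_comm (and_congr ?_ ?_))
      · exact ⟨fun k ⟨w, hw⟩ => c1 w hw ▸ (k w hw).symm, fun k w hw => c1 w hw ▸ (k ⟨w, hw⟩).symm⟩
      · exact ⟨fun k ⟨w, hw⟩ => c4 w hw ▸ (k w hw).symm, fun k w hw => c4 w hw ▸ (k ⟨w, hw⟩).symm⟩
    have l3 : ∀ p, p ∈ LL G G.cliqueNum col d e a b c ↔ p < G.cliqueNum ∧ p ≠ 3 ∧ p ≠ 4 ∧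
        ((∃ w, PY G d e a b c w) → p ≠ 2) ∧ ((∃ w, PY G b c d e a w) → p ≠ 0) := by
      intro p
      rw [mem_LL, cd, ce]
      refine and_congr_right fun _ => and_congr ne_comm (and_congr ne_comm (and_congr ?_ ?_))
      · exact ⟨fun k ⟨w, hw⟩ => c3 w hw ▸ (k w hw).symm, fun k w hw => c3 w hw ▸ (k ⟨w, hw⟩).symm⟩
      · exact ⟨fun k ⟨w, hw⟩ => c1 w hw ▸ (k w hw).symm, fun k w hw => c1 w hw ▸ (k ⟨w, hw⟩).symm⟩
    have g0 : 0 < G.cliqueNum := by omega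
    have g1 : 1 < G.cliqueNum := by omega
    have g2 : 2 < G.cliqueNum := by omega
    have g3 : 3 < G.cliqueNum := by omega
    have g4 : 4 < G.cliqueNum := by omega
    by_cases e0 : ∃ w, PY G a b c d e w
    swap
    · refine D.swap12.swap23.swap12.swap23.swap12.swap23.swap12.swap23.color
        (Or.inl ⟨1, ?_, ?_⟩) (Or.inl ⟨3, ?_, 4, ?_, by norm_num, ?_, ?_⟩) <;>
      simp only [l0, l1, l3] <;> simp [*]
    by_cases e4 : ∃ w, PY G e a b c d w
    swap
    · refine D.swap23.color
        (Or.inl ⟨1, ?_, ?_⟩) (Or.inl ⟨3, ?_, 4, ?_, by norm_num, ?_, ?_⟩) <;>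
      simp only [l0, l1, l3] <;> simp [*]
    by_cases e1 : ∃ w, PY G b c d e a w
    swap
    · refine D.swap12.color
        (Or.inl ⟨3, ?_, ?_⟩) (Or.inl ⟨0, ?_, 1, ?_, by norm_num, ?_, ?_⟩) <;>
      simp only [l0, l1, l3] <;> simp [*]
    by_cases e3 : ∃ w, PY G d e a b c w
    swap
    · refine D.color
        (Or.inl ⟨4, ?_, ?_⟩) (Or.inl ⟨2, ?_, 1, ?_, by norm_num, ?_, ?_⟩) <;>
      simp only [l0, l1, l3] <;> simp [*]
    have h5 : G.cliqueNum = 5 := by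
      by_contra h5
      exact hB ⟨e0, e1, e3, e4, by omega⟩
    refine D.color
        (Or.inl ⟨4, ?_, ?_⟩) (Or.inr ⟨?_, 1, ?_, ?_, ?_⟩)
    · simp only [l1]; simp [*]
    · simp only [l0]; simp [*]
    · refine D.cT.trans (Finset.card_le_one.2 ?_)
      intro p hp q hq
      rw [l3] at hp hq
      obtain ⟨p1, p2, p3, p4, p5⟩ := hp
      obtain ⟨q1, q2, q3, q4, q5⟩ := hq
      have := p4 e3
      have := p5 e1
      have := q4 e3
      have := q5 e1
      omega
    · simp only [l3]; simp [*]
    · simp only [l0]; simp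
    · simp only [l1]; simp

end
end
end S19

theorem stmt_19     {V : Type*} [Fintype V] (G : SimpleGraph V)
    (hconn : G.Connected)
    (hclaw : _root_.Free G claw) (h4K1 : _root_.Free G fourK1) (hK5e : _root_.Free G K5e)
    (hW5 : _root_.Free G wheel5) (hC5t : _root_.Free G C5twin) (hP5t : _root_.Free G P5twin)
    (v : ZMod 5 → V) (hv : Function.Injective v)
    (hC : ∀ i j : ZMod 5, G.Adj (v i) (v j) ↔ (j = i + 1 ∨ i = j + 1))
    (i : ZMod 5)
    (hR : cycR G v = ∅)
    (hX2 : cycX G v (i + 2) = ∅) (hX4 : cycX G v (i + 4) = ∅)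
    (homega : 5 ≤ G.cliqueNum) :
    G.chromaticNumber = (G.cliqueNum : ℕ∞) := by
  have hj : ∀ j : ZMod 5, j = i ∨ j = i + 1 ∨ j = i + 2 ∨ j = i + 3 ∨ j = i + 4 := by
    clear hX2 hX4
    revert i
    decide
  have h : S19.Cyc G (v i) (v (i + 1)) (v (i + 2)) (v (i + 3)) (v (i + 4)) := by
    constructor <;> rw [hC] <;> clear hX2 hX4 hj <;> revert i <;> decide
  have hall : ∀ w, S19.Base G (v i) (v (i + 1)) (v (i + 2)) (v (i + 3)) (v (i + 4)) w ∨
      S19.PX G (v i) (v (i + 1)) (v (i + 2)) (v (i + 3)) (v (i + 4)) w ∨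
      S19.PX G (v (i + 1)) (v (i + 2)) (v (i + 3)) (v (i + 4)) (v i) w ∨
      S19.PX G (v (i + 3)) (v (i + 4)) (v i) (v (i + 1)) (v (i + 2)) w := by
    intro w
    by_cases hw : w ∈ Set.range v
    · obtain ⟨j, rfl⟩ := hw
      left
      rcases hj j with rfl | rfl | rfl | rfl | rfl <;> simp [S19.Base]
    · have hne : ∀ j, w ≠ v j := fun j k => hw ⟨j, k.symm⟩
      have key := S19.classify hclaw hC5t hW5 h w (hne _) (hne _) (hne _) (hne _) (hne _) (by
        rintro ⟨a0, a1, a2, a3, a4⟩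
        have : w ∈ cycR G v := by
          refine ⟨hw, fun j => ?_⟩
          rcases hj j with rfl | rfl | rfl | rfl | rfl <;> assumption
        rw [hR] at this
        exact this)
      rcases key with k | k | k | k | k | k
      · exact Or.inl k
      · exact Or.inr (Or.inl k)
      · exact Or.inr (Or.inr (Or.inl k))
      · exfalso
        have : w ∈ cycX G v (i + 2) := by
          refine ⟨hw, fun j => ?_⟩
          have n : ∀ i : ZMod 5, ¬ (i = i + 2 ∨ i = i + 2 + 1) ∧ ¬ (i + 1 = i + 2 ∨ i + 1 = i + 2 + 1)
            ∧ (i + 2 = i + 2 ∨ i + 2 = i + 2 + 1) ∧ (i + 3 = i + 2 ∨ i + 3 = i + 2 + 1) ∧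
            ¬ (i + 4 = i + 2 ∨ i + 4 = i + 2 + 1) := by decide
          obtain ⟨n0, n1, n2, n3, n4⟩ := n i
          rcases hj j with rfl | rfl | rfl | rfl | rfl
          · exact iff_of_false k.d n0
          · exact iff_of_false k.e n1
          · exact iff_of_true k.a n2
          · exact iff_of_true k.b n3
          · exact iff_of_false k.c n4
        rw [hX2] at this
        exact this
      · exact Or.inr (Or.inr (Or.inr k))
      · exfalso
        have : w ∈ cycX G v (i + 4) := by
          refine ⟨hw, fun j => ?_⟩
          have n : ∀ i : ZMod 5, (i = i + 4 ∨ i = i + 4 + 1) ∧ ¬ (i + 1 = i + 4 ∨ i + 1 = i + 4 + 1)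
            ∧ ¬ (i + 2 = i + 4 ∨ i + 2 = i + 4 + 1) ∧ ¬ (i + 3 = i + 4 ∨ i + 3 = i + 4 + 1) ∧
            (i + 4 = i + 4 ∨ i + 4 = i + 4 + 1) := by decide
          obtain ⟨n0, n1, n2, n3, n4⟩ := n i
          rcases hj j with rfl | rfl | rfl | rfl | rfl
          · exact iff_of_true k.b n0
          · exact iff_of_false k.c n1
          · exact iff_of_false k.d n2
          · exact iff_of_false k.e n3
          · exact iff_of_true k.a n4
        rw [hX4] at this
        exact this
  exact le_antisymm (S19.main hclaw hK5e hP5t h hall homega).chromaticNumber_le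
    SimpleGraph.cliqueNum_le_chromaticNumber
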